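/- arXiv:0706.4238 — 5 statements merged into one kernel-verified Lean document; each statement's English description precedes it below -/
import Mathlib

section
/- Let k be real with |k| < 1 and ε real, and define θ(α) = α + arctan( k·sin(α − ε) / (1 − k·cos(α − ε)) ). Then for every real α, θ is differentiable at α with derivative θ'(α) = (1 − k·cos(α − ε)) / (1 + k² − 2k·cos(α − ε)); that is, dθ/dα equals the ex-centric derivative function Dex α. -/
open Real

theorem theta_hasDerivAt_Dex (k ε : ℝ) (hk : |k| < 1) (α : ℝ) :
    HasDerivAt (fun α : ℝ =>
        α + Real.arctan (k * Real.sin (α - ε) / (1 - k * Real.cos (α - ε))))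
      ((1 - k * Real.cos (α - ε)) / (1 + k ^ 2 - 2 * k * Real.cos (α - ε))) α := by
  have hD : 0 < 1 - k * Real.cos (α - ε) := by
    have h1 : |k * Real.cos (α - ε)| ≤ |k| := by
      rw [abs_mul]
      exact mul_le_of_le_one_right (abs_nonneg _) (Real.abs_cos_le_one _)
    have h2 := le_abs_self (k * Real.cos (α - ε))
    linarith
  have hsub : HasDerivAt (fun x : ℝ => x - ε) 1 α := (hasDerivAt_id α).sub_const ε
  have hs := (hsub.sin).const_mul k
  have hc := ((hsub.cos).const_mul k).const_sub 1
  have h := (hasDerivAt_id α).add ((hs.div hc hD.ne').arctan)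
  refine h.congr_deriv ?_
  have hsc := Real.sin_sq_add_cos_sq (α - ε)
  simp only [Pi.div_apply]
  generalize Real.sin (α - ε) = s at *
  generalize Real.cos (α - ε) = c at *
  have hQ : 1 + k ^ 2 - 2 * k * c = (1 - k * c) ^ 2 + (k * s) ^ 2 := by
    linear_combination (-k ^ 2) * hsc
  have hQ0 : (1 - k * c) ^ 2 + (k * s) ^ 2 ≠ 0 := by positivity
  have hD0 := hD.ne'
  have e : 1 + (k * s / (1 - k * c)) ^ 2 = ((1 - k * c) ^ 2 + (k * s) ^ 2) / (1 - k * c) ^ 2 := by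
    rw [div_pow, add_div, div_self (pow_ne_zero 2 hD0)]
  rw [hQ, e, one_div_div, div_mul_div_cancel₀' (pow_ne_zero 2 hD0), eq_div_iff hQ0, add_mul,
    div_mul_cancel₀ _ hQ0]
  ring
end

section
/- For any real k with |k| < 1 and any real ε, ∫_0^{2π} (1 − k·cos(α − ε)) / (1 + k² − 2k·cos(α − ε)) dα = 2π. -/
open Real

theorem integral_Dex_lt_one (k ε : ℝ) (hk : |k| < 1) :
    ∫ α in (0:ℝ)..(2 * π),
      (1 - k * Real.cos (α - ε)) / (1 + k ^ 2 - 2 * k * Real.cos (α - ε)) = 2 * π := by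
  have hpos : ∀ x : ℝ, 0 < 1 - k * Real.cos x := by
    intro x
    have h1 : |k * Real.cos x| < 1 := by
      rw [abs_mul]
      have := Real.abs_cos_le_one x
      nlinarith [abs_nonneg k, abs_nonneg (Real.cos x)]
    linarith [(abs_lt.mp h1).2]
  have hden : ∀ x : ℝ, 0 < 1 + k ^ 2 - 2 * k * Real.cos x := by
    intro x
    have h1 := hpos x
    have h2 := Real.sin_sq_add_cos_sq x
    have h3 : 1 + k ^ 2 - 2 * k * Real.cos x
        = (1 - k * Real.cos x) ^ 2 + (k * Real.sin x) ^ 2 := by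
      linear_combination (-k ^ 2) * h2
    rw [h3]
    positivity
  have hderiv : ∀ x ∈ Set.uIcc (0:ℝ) (2 * π), HasDerivAt
      (fun α : ℝ => α + Real.arctan (k * Real.sin (α - ε) / (1 - k * Real.cos (α - ε))))
      ((1 - k * Real.cos (x - ε)) / (1 + k ^ 2 - 2 * k * Real.cos (x - ε))) x := by
    intro x _
    have h0 : HasDerivAt (fun α : ℝ => α - ε) 1 x := (hasDerivAt_id x).sub_const ε
    have hs := (h0.sin).const_mul k
    have hc := ((h0.cos).const_mul k).const_sub 1
    have hp := hpos (x - ε)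
    have hd := hden (x - ε)
    have h := (hasDerivAt_id x).add (hs.div hc hp.ne').arctan
    refine h.congr_deriv ?_
    have h2 := Real.sin_sq_add_cos_sq (x - ε)
    simp only [Pi.div_apply]
    generalize Real.sin (x - ε) = s at *
    generalize Real.cos (x - ε) = c at *
    have e : 1 + (k * s / (1 - k * c)) ^ 2 = (1 + k ^ 2 - 2 * k * c) / (1 - k * c) ^ 2 := by
      field_simp
      linear_combination k ^ 2 * h2
    rw [e]
    have hd' := hd.ne'
    have hp' := hp.ne'
    rw [eq_div_iff hd', one_div_div, div_mul_div_comm, add_mul,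
      mul_comm ((1 - k * c) ^ 2), mul_div_mul_right _ _ (pow_ne_zero 2 hp'), div_mul_cancel₀ _ hd']
    linear_combination (-k ^ 2) * h2
  rw [intervalIntegral.integral_eq_sub_of_hasDerivAt hderiv]
  · have e : 2 * π - ε = -ε + 2 * π := by ring
    simp only [e, Real.sin_add_two_pi, Real.cos_add_two_pi, zero_sub]
    ring
  · apply Continuous.intervalIntegrable
    exact Continuous.div (by fun_prop) (by fun_prop) (fun x => (hden _).ne')
end

section
/- For any real k with |k| > 1 and any real ε, ∫_0^{2π} (1 − k·cos(α − ε)) / (1 + k² − 2k·cos(α − ε)) dα = 0. -/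
open Real

theorem integral_Dex_gt_one (k ε : ℝ) (hk : 1 < |k|) :
    ∫ α in (0:ℝ)..(2 * π),
      (1 - k * Real.cos (α - ε)) / (1 + k ^ 2 - 2 * k * Real.cos (α - ε)) = 0 := by
  have hne : ∀ x : ℝ, Real.cos x - k ≠ 0 := by
    intro x h
    have h1 : k = Real.cos x := by linarith
    rw [h1] at hk
    exact absurd (Real.abs_cos_le_one x) (not_le.mpr hk)
  have hpos : ∀ x : ℝ, 0 < 1 + k ^ 2 - 2 * k * Real.cos x := by
    intro x
    have h1 : 0 < (Real.cos x - k) ^ 2 := by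
      have := hne x
      positivity
    nlinarith [Real.sin_sq_add_cos_sq x, sq_nonneg (Real.sin x)]
  have hd : ∀ x : ℝ, HasDerivAt
      (fun α => Real.arctan (Real.sin (α - ε) / (Real.cos (α - ε) - k)))
      ((1 - k * Real.cos (x - ε)) / (1 + k ^ 2 - 2 * k * Real.cos (x - ε))) x := by
    intro x
    have hl : HasDerivAt (fun α : ℝ => α - ε) 1 x := (hasDerivAt_id x).sub_const ε
    have h := ((hl.sin).div ((hl.cos).sub_const k) (hne (x - ε))).arctan
    refine h.congr_deriv ?_
    have hc := hne (x - ε)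
    have hp := hpos (x - ε)
    have hs := Real.sin_sq_add_cos_sq (x - ε)
    simp only [Pi.div_apply]
    generalize Real.cos (x - ε) = c at *
    generalize Real.sin (x - ε) = s at *
    have e : 1 + (s / (c - k)) ^ 2 = (1 + k ^ 2 - 2 * k * c) / (c - k) ^ 2 := by
      field_simp
      linear_combination hs
    rw [e]
    have e2 : c * 1 * (c - k) - s * (-s * 1) = 1 - k * c := by
      linear_combination hs
    rw [e2]
    have hp' := hp.ne'
    generalize 1 + k ^ 2 - 2 * k * c = D at *
    field_simp
  rw [intervalIntegral.integral_eq_sub_of_hasDerivAt (fun x _ => hd x)]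
  · have : 2 * π - ε = (0 - ε) + 2 * π := by ring
    rw [this, Real.sin_add_two_pi, Real.cos_add_two_pi, sub_self]
  · apply Continuous.intervalIntegrable
    exact Continuous.div (by fun_prop) (by fun_prop) (fun x => (hpos (x - ε)).ne')
end

section
/- Let k be real with |k| < 1 and ε real, and define β(α) = arctan( k·sin(α − ε) / (1 − k·cos(α − ε)) ). Then for every real α, sin(β(α)) = k·sin(α + β(α) − ε); that is, setting θ = α + β(α), the centric and ex-centric variables satisfy the inversion relation β = arcsin(k·sin(θ − ε)), so that α = θ − arcsin(k·sin(θ − ε)). -/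
open Real

theorem inversion_relation (k ε : ℝ) (hk : |k| < 1) (α : ℝ) :
    Real.sin (Real.arctan (k * Real.sin (α - ε) / (1 - k * Real.cos (α - ε)))) =
      k * Real.sin (α + Real.arctan (k * Real.sin (α - ε) / (1 - k * Real.cos (α - ε))) - ε) ∧
    α = (α + Real.arctan (k * Real.sin (α - ε) / (1 - k * Real.cos (α - ε)))) -
      Real.arcsin (k * Real.sin
        ((α + Real.arctan (k * Real.sin (α - ε) / (1 - k * Real.cos (α - ε)))) - ε)) := by
  have hpos : 0 < 1 - k * Real.cos (α - ε) := by
    have h1 : |k * Real.cos (α - ε)| ≤ |k| := by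
      rw [abs_mul]
      exact mul_le_of_le_one_right (abs_nonneg k) (Real.abs_cos_le_one _)
    have h2 := le_abs_self (k * Real.cos (α - ε))
    linarith
  have ht := Real.tan_arctan (k * Real.sin (α - ε) / (1 - k * Real.cos (α - ε)))
  have hc := Real.cos_arctan_pos (k * Real.sin (α - ε) / (1 - k * Real.cos (α - ε)))
  have hl := Real.neg_pi_div_two_lt_arctan (k * Real.sin (α - ε) / (1 - k * Real.cos (α - ε)))
  have hu := Real.arctan_lt_pi_div_two (k * Real.sin (α - ε) / (1 - k * Real.cos (α - ε)))
  generalize Real.arctan (k * Real.sin (α - ε) / (1 - k * Real.cos (α - ε))) = b at *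
  have key : Real.sin b = k * Real.sin (α + b - ε) := by
    rw [Real.tan_eq_sin_div_cos, div_eq_div_iff hc.ne' hpos.ne'] at ht
    have h3 : α + b - ε = (α - ε) + b := by ring
    rw [h3, Real.sin_add]
    linarith
  refine ⟨key, ?_⟩
  rw [← key, Real.arcsin_sin hl.le hu.le]
  ring
end

section
/- Let R and r be real numbers with R > 0 and 0 ≤ r < R, and let ε be real. Then ∫_0^{2π} (R − r·cos(α − ε)) / (R² + r² − 2Rr·cos(α − ε)) dα = 2π/R. -/
open Real

theorem integral_I1_general (R r ε : ℝ) (hR : 0 < R) (hr : 0 ≤ r) (hrR : r < R) :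
    ∫ α in (0:ℝ)..(2 * π),
      (R - r * Real.cos (α - ε)) / (R ^ 2 + r ^ 2 - 2 * R * r * Real.cos (α - ε)) =
      2 * π / R := by
  have h1 : ∀ t : ℝ, 0 < R - r * Real.cos t := fun t => by
    nlinarith [Real.cos_le_one t]
  have h2 : ∀ t : ℝ, 0 < R ^ 2 + r ^ 2 - 2 * R * r * Real.cos t := fun t => by
    have hc := Real.cos_le_one t
    have hRr : 0 ≤ R * r := by positivity
    nlinarith [mul_nonneg hRr (sub_nonneg.2 hc), mul_pos (sub_pos.2 hrR) (sub_pos.2 hrR)]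
  have hd : ∀ α : ℝ, HasDerivAt
      (fun α => (α + Real.arctan (r * Real.sin (α - ε) / (R - r * Real.cos (α - ε)))) / R)
      ((R - r * Real.cos (α - ε)) / (R ^ 2 + r ^ 2 - 2 * R * r * Real.cos (α - ε))) α := by
    intro α
    have hi : HasDerivAt (fun α : ℝ => α - ε) 1 α := (hasDerivAt_id' α).sub_const ε
    have hq := ((hi.sin.const_mul r).fun_div ((hi.cos.const_mul r).const_sub R) (h1 (α - ε)).ne')
    have hF := ((hasDerivAt_id' α).fun_add hq.arctan).div_const R
    refine hF.congr_deriv ?_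
    have a1 := (h1 (α - ε)).ne'
    have a2 := (h2 (α - ε)).ne'
    have hs := Real.sin_sq_add_cos_sq (α - ε)
    generalize Real.sin (α - ε) = s at *
    generalize Real.cos (α - ε) = c at *
    have e : 1 + (r * s / (R - r * c)) ^ 2 = (R ^ 2 + r ^ 2 - 2 * R * r * c) / (R - r * c) ^ 2 := by
      field_simp
      linear_combination r ^ 2 * hs
    rw [e]
    clear hF hq e
    generalize hD : R ^ 2 + r ^ 2 - 2 * R * r * c = D at *
    field_simp
    rw [← hD]
    linear_combination (-r ^ 2) * hs
  rw [intervalIntegral.integral_eq_sub_of_hasDerivAt (fun x _ => hd x)]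
  · have p1 : Real.sin (2 * π - ε) = Real.sin (0 - ε) := by
      rw [Real.sin_two_pi_sub, zero_sub, Real.sin_neg]
    have p2 : Real.cos (2 * π - ε) = Real.cos (0 - ε) := by
      rw [Real.cos_two_pi_sub, zero_sub, Real.cos_neg]
    rw [p1, p2]
    ring
  · apply Continuous.intervalIntegrable
    exact Continuous.div (by fun_prop) (by fun_prop) (fun x => (h2 (x - ε)).ne')
end
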